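/- Let R be a commutative Noetherian ring, 𝔞 an ideal of R, 𝔭 a prime ideal of R containing 𝔞, M an R-module, and s ≥ 0, t ≥ 0 integers. Suppose that: (1) Ext^{s+t−i}_R(R/𝔭, H^i_𝔞(M)) = 0 for all integers i with 0 ≤ i < t or t+1 ≤ i ≤ s+t; (2) Ext^{s+1+i}_R(R/𝔭, H^{t−i}_𝔞(M)) = 0 for all integers 0 ≤ i ≤ t; (3) Ext^{s−1−i}_R(R/𝔭, H^{t+i}_𝔞(M)) = 0 for all integers 0 ≤ i ≤ s−1. Then the Bass numbers satisfy μ^{s+t}(𝔭, M) = μ^{s}(𝔭, H^{t}_𝔞(M)). -/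

import Mathlib

open CategoryTheory

universe u

/-- The `R`-module `Ext^i_R(N, M)` for two `R`-modules (objects of `ModuleCat R`). -/
noncomputable def extObj {R : Type u} [CommRing R] (N M : ModuleCat.{u} R) (i : ℕ) :
    ModuleCat.{u} R :=
  ((Ext R (ModuleCat.{u} R) i).obj (Opposite.op N)).obj M

/-- The `R`-module `Ext^i_R(R/𝔞, M)`. -/
noncomputable def extIdeal {R : Type u} [CommRing R] (𝔞 : Ideal R) (i : ℕ)
    (M : ModuleCat.{u} R) : ModuleCat.{u} R :=
  extObj (ModuleCat.of R (R ⧸ 𝔞)) M i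

/-- An `R`-module `M` is `𝔞`-cofinite if `Supp_R M ⊆ V(𝔞)` and `Ext^i_R(R/𝔞, M)` is a finitely
generated `R`-module for every `i ≥ 0`. -/
def IsCofinite {R : Type u} [CommRing R] (𝔞 : Ideal R) (M : ModuleCat.{u} R) : Prop :=
  Module.support R M ⊆ PrimeSpectrum.zeroLocus (𝔞 : Set R) ∧
    ∀ i : ℕ, Module.Finite R (extIdeal 𝔞 i M)

/-- The Krull dimension `dim_R M` of an `R`-module `M`: the Krull dimension of its support,
i.e. the supremum of `dim R/𝔭` over primes `𝔭` in the support of `M`. -/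
noncomputable def moduleDim (R : Type u) [CommRing R] (M : Type u) [AddCommGroup M]
    [Module R M] : WithBot ℕ∞ :=
  Order.krullDim (Module.support R M)

/-- An `R`-module `M` is in `FD_{≤n}` if there is a finitely generated submodule `N ⊆ M`
with `dim_R (M/N) ≤ n`. -/
def MemFD (R : Type u) [CommRing R] (n : ℕ) (M : Type u) [AddCommGroup M] [Module R M] : Prop :=
  ∃ N : Submodule R M, N.FG ∧ moduleDim R (M ⧸ N) ≤ (n : WithBot ℕ∞)

/-- An `R`-module `M` is `𝔞`-torsion if every element is annihilated by some power of `𝔞`. -/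
def IsTorsionIdeal {R : Type u} [CommRing R] (𝔞 : Ideal R) (M : Type u) [AddCommGroup M]
    [Module R M] : Prop :=
  ∀ m : M, ∃ n : ℕ, ∀ a ∈ 𝔞 ^ n, a • m = 0

/-- The arithmetic rank of an ideal `𝔞`: the least `n` such that there exist `a₁, …, aₙ ∈ R`
with `Rad (a₁, …, aₙ) = Rad 𝔞`. -/
noncomputable def arithRank {R : Type u} [CommRing R] (𝔞 : Ideal R) : ℕ :=
  sInf {n : ℕ | ∃ f : Fin n → R, (Ideal.span (Set.range f)).radical = 𝔞.radical}

/-- The Bass number `μ^j(𝔭, M)`: the dimension of the `κ(𝔭)`-vector space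
`Ext^j_{R_𝔭}(κ(𝔭), M_𝔭)`, where `κ(𝔭) = R_𝔭/𝔭R_𝔭`. Since this Ext module is a vector space
over the residue field `κ(𝔭)`, its `R_𝔭`-submodules are exactly its `κ(𝔭)`-subspaces, and its
dimension is the Krull dimension of its lattice of `R_𝔭`-submodules, which we use as the
definition (an element of `WithBot ℕ∞`). -/
noncomputable def bassNumber {R : Type u} [CommRing R] (𝔭 : Ideal R) [𝔭.IsPrime] (j : ℕ)
    (M : ModuleCat.{u} R) : WithBot ℕ∞ :=
  Order.krullDim (Submodule (Localization.AtPrime 𝔭)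
    (extObj
      (ModuleCat.of (Localization.AtPrime 𝔭)
        (IsLocalRing.ResidueField (Localization.AtPrime 𝔭)))
      (ModuleCat.of (Localization.AtPrime 𝔭) (LocalizedModule 𝔭.primeCompl M)) j))

universe v

namespace CochainComplex
variable {R : Type u} [CommRing R] (K : CochainComplex (ModuleCat.{v} R) ℕ)

/-- The class in the homology of an explicit cocycle. -/
noncomputable def cocycleToHomology (n : ℕ) :
    LinearMap.ker (K.d n (n + 1)).hom →ₗ[R] K.homology n :=
  (K.liftCycles (ModuleCat.ofHom (LinearMap.ker (K.d n (n + 1)).hom).subtype) (n + 1) (by simp)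
    (by ext x; exact x.2) ≫ K.homologyπ n).hom

lemma cocycleToHomology_surjective (n : ℕ) : Function.Surjective (K.cocycleToHomology n) := by
  intro y
  obtain ⟨z, rfl⟩ := (ModuleCat.epi_iff_surjective (K.homologyπ n)).1 inferInstance y
  have hz : (K.d n (n + 1)).hom ((K.iCycles n).hom z) = 0 := by
    rw [← LinearMap.comp_apply, ← ModuleCat.hom_comp, K.iCycles_d]; rfl
  refine ⟨⟨(K.iCycles n).hom z, hz⟩, ?_⟩
  refine congrArg (K.homologyπ n).hom ?_
  apply (ModuleCat.mono_iff_injective (K.iCycles n)).1 inferInstance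
  change (K.iCycles n).hom ((K.liftCycles _ _ _ _).hom _) = _
  rw [← LinearMap.comp_apply, ← ModuleCat.hom_comp, K.liftCycles_i]; rfl

lemma cocycleToHomology_eq_zero_iff (n : ℕ) (x : LinearMap.ker (K.d n (n + 1)).hom) :
    K.cocycleToHomology n x = 0 ↔ ∃ y, (K.d ((ComplexShape.up ℕ).prev n) n).hom y = x.1 := by
  have hex : (ShortComplex.mk _ _ (K.toCycles_comp_homologyπ
      ((ComplexShape.up ℕ).prev n) n)).Exact :=
    ShortComplex.exact_of_g_is_cokernel _ (K.homologyIsCokernel _ n rfl)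
  have hi : Function.Injective (K.iCycles n).hom :=
    (ModuleCat.mono_iff_injective (K.iCycles n)).1 inferInstance
  have hl : (K.iCycles n).hom ((K.liftCycles
      (ModuleCat.ofHom (LinearMap.ker (K.d n (n + 1)).hom).subtype) (n + 1) (by simp)
      (by ext x; exact x.2)).hom x) = x.1 := by
    rw [← LinearMap.comp_apply, ← ModuleCat.hom_comp, K.liftCycles_i]; rfl
  constructor
  · intro h
    obtain ⟨y, hy⟩ := (ShortComplex.moduleCat_exact_iff _).1 hex _ h
    refine ⟨y, ?_⟩
    rw [← hl, ← K.toCycles_i]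
    exact congrArg (K.iCycles n).hom hy
  · rintro ⟨y, hy⟩
    have : (K.toCycles ((ComplexShape.up ℕ).prev n) n).hom y = (K.liftCycles
      (ModuleCat.ofHom (LinearMap.ker (K.d n (n + 1)).hom).subtype) (n + 1) (by simp)
      (by ext x; exact x.2)).hom x := by
      apply hi
      rw [hl, ← hy, ← LinearMap.comp_apply, ← ModuleCat.hom_comp, K.toCycles_i]
    refine (congrArg (K.homologyπ n).hom this.symm).trans ?_
    rw [← LinearMap.comp_apply, ← ModuleCat.hom_comp, K.toCycles_comp_homologyπ]; rfl

variable {K} in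
lemma homologyMap_cocycleToHomology {L : CochainComplex (ModuleCat.{v} R) ℕ} (φ : K ⟶ L) (n : ℕ)
    (x : LinearMap.ker (K.d n (n + 1)).hom) (y : LinearMap.ker (L.d n (n + 1)).hom)
    (h : (φ.f n).hom x.1 = y.1) :
    (HomologicalComplex.homologyMap φ n).hom (K.cocycleToHomology n x) =
      L.cocycleToHomology n y := by
  change (HomologicalComplex.homologyMap φ n).hom ((K.homologyπ n).hom _) = (L.homologyπ n).hom _
  rw [← LinearMap.comp_apply, ← ModuleCat.hom_comp, HomologicalComplex.homologyπ_naturality]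
  refine congrArg (L.homologyπ n).hom ?_
  apply (ModuleCat.mono_iff_injective (L.iCycles n)).1 inferInstance
  change (L.iCycles n).hom ((HomologicalComplex.cyclesMap φ n).hom ((K.liftCycles _ _ _ _).hom _)) =
    (L.iCycles n).hom ((L.liftCycles _ _ _ _).hom _)
  rw [← LinearMap.comp_apply, ← ModuleCat.hom_comp, HomologicalComplex.cyclesMap_i,
    ← LinearMap.comp_apply, ← ModuleCat.hom_comp, ← Category.assoc, K.liftCycles_i,
    ← LinearMap.comp_apply, ← ModuleCat.hom_comp, L.liftCycles_i]
  exact h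

end CochainComplex

namespace CategoryTheory.ProjectiveResolution

variable {R : Type u} [CommRing R] {C : Type*} [Category* C] [Abelian C] [Linear R C]
  [EnoughProjectives C]

variable (R) in
/-- The map of `Hom` complexes into `Y` induced by a morphism of projective resolutions. -/
def linearYonedaObjMap {X X' : C} {P : ProjectiveResolution X} {P' : ProjectiveResolution X'}
    {g : X' ⟶ X} (φ : Hom P' P g) (Y : C) :
    P.complex.linearYonedaObj R Y ⟶ P'.complex.linearYonedaObj R Y :=
  (HomologicalComplex.unopFunctor _ _).map
    ((((linearYoneda R C).obj Y).rightOp.mapHomologicalComplex _).map φ.hom).op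

lemma isoExt_hom_naturality {X X' : C} {P : ProjectiveResolution X} {P' : ProjectiveResolution X'}
    {g : X' ⟶ X} (φ : Hom P' P g) (n : ℕ) (Y : C) :
    ((Ext R C n).map g.op).app Y ≫ (P'.isoExt n Y).hom =
      (P.isoExt n Y).hom ≫ HomologicalComplex.homologyMap (linearYonedaObjMap R φ Y) n := by
  have h := ProjectiveResolution.isoLeftDerivedObj_inv_naturality g P' P φ.hom
    (by simpa using! φ.hom_f_zero_comp_π_f_zero) ((linearYoneda R C).obj Y).rightOp n
  have h2 : ((P'.complex.linearYonedaObj R Y).homologyOp n).inv ≫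
      HomologicalComplex.homologyMap ((HomologicalComplex.opFunctor _ _).map
        (linearYonedaObjMap R φ Y).op) n =
      (HomologicalComplex.homologyMap (linearYonedaObjMap R φ Y) n).op ≫
        ((P.complex.linearYonedaObj R Y).homologyOp n).inv :=
    (Iso.inv_comp_eq _).2 (((Iso.eq_comp_inv _).2
      (HomologicalComplex.homologyOp_hom_naturality (linearYonedaObjMap R φ Y) n)).trans
      (Category.assoc _ _ _))
  have h' := congrArg Quiver.Hom.unop h
  have h2' := congrArg Quiver.Hom.unop h2
  exact (Category.assoc _ _ _).symm.trans
    ((congrArg (fun x => x ≫ ((P'.complex.linearYonedaObj R Y).homologyOp n).inv.unop) h').trans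
      ((Category.assoc _ _ _).trans
        ((congrArg
          (fun x => (P.isoLeftDerivedObj ((linearYoneda R C).obj Y).rightOp n).inv.unop ≫ x) h2').trans
            (Category.assoc _ _ _).symm)))

end CategoryTheory.ProjectiveResolution

namespace LinearMap
variable {R Z A B : Type*} [Ring R] [AddCommGroup Z] [AddCommGroup A] [AddCommGroup B]
  [Module R Z] [Module R A] [Module R B]

/-- Two surjections from `Z` with the same kernel have isomorphic targets. -/
noncomputable def equivOfKerEq (α : Z →ₗ[R] A) (β : Z →ₗ[R] B) (hα : Function.Surjective α)
    (hβ : Function.Surjective β) (h : ker α = ker β) : A ≃ₗ[R] B :=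
  (α.quotKerEquivOfSurjective hα).symm ≪≫ₗ Submodule.quotEquivOfEq _ _ h ≪≫ₗ
    β.quotKerEquivOfSurjective hβ

@[simp]
lemma equivOfKerEq_apply (α : Z →ₗ[R] A) (β : Z →ₗ[R] B) (hα : Function.Surjective α)
    (hβ : Function.Surjective β) (h : ker α = ker β) (z : Z) :
    equivOfKerEq α β hα hβ h (α z) = β z := by
  have : (α.quotKerEquivOfSurjective hα).symm (α z) = Submodule.Quotient.mk z := by
    rw [LinearEquiv.symm_apply_eq]; rfl
  simp only [equivOfKerEq, LinearEquiv.trans_apply, this]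
  rfl

end LinearMap

namespace CategoryTheory.ProjectiveResolution
open Abelian
section
variable {C : Type u} [Category.{v} C] [Abelian C] [HasExt.{v} C]
  {X : C} (P : ProjectiveResolution X) {Y : C}

lemma extMk_zero_eq_zero_iff (f : P.complex.X 0 ⟶ Y) (hf : P.complex.d 1 0 ≫ f = 0) :
    P.extMk f 1 rfl hf = 0 ↔ f = 0 := by
  refine ⟨fun h => ?_, ?_⟩
  · simp only [← P.extEquivCohomologyClass.apply_eq_iff_eq,
      extEquivCohomologyClass_extMk, extEquivCohomologyClass_zero,
      CochainComplex.HomComplex.CohomologyClass.mk_eq_zero_iff] at h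
    rw [CochainComplex.HomComplex.Cocycle.toSingleMk_mem_coboundaries_iff _ _ _ _ _ 1 (by lia)] at h
    obtain ⟨g, hg⟩ := h
    have hz : Limits.IsZero (P.cochainComplex.X 1) :=
      P.cochainComplex.isZero_of_isStrictlyLE 0 1 (by lia)
    rw [hz.eq_of_src g 0] at hg
    simpa using hg.symm
  · rintro rfl
    simp
end
variable {R : Type u} [CommRing R]
  {X : ModuleCat.{u} R} (P : ProjectiveResolution X) (Y : ModuleCat.{u} R)

/-- The class in `Ext X Y n` of a cocycle of the `Hom` complex of a projective resolution. -/
noncomputable def cocycleToExt (n : ℕ) :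
    LinearMap.ker ((P.complex.linearYonedaObj R Y).d n (n + 1)).hom →ₗ[R] Abelian.Ext X Y n where
  toFun f := P.extMk f.1 (n + 1) rfl f.2
  map_add' f g := (P.add_extMk _ _ _ _ _ _).symm
  map_smul' r f := by
    rw [RingHom.id_apply, Ext.smul_eq_comp_mk₀]
    refine Eq.trans ?_ (P.extMk_comp_mk₀ f.1 _ rfl f.2 (r • 𝟙 Y)).symm
    congr 1

lemma cocycleToExt_surjective (n : ℕ) : Function.Surjective (P.cocycleToExt Y n) := by
  intro α
  obtain ⟨f, hf, rfl⟩ := P.extMk_surjective α (n + 1) rfl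
  exact ⟨⟨f, hf⟩, rfl⟩

lemma cocycleToExt_eq_zero_iff (n : ℕ)
    (f : LinearMap.ker ((P.complex.linearYonedaObj R Y).d n (n + 1)).hom) :
    P.cocycleToExt Y n f = 0 ↔
      ∃ y, ((P.complex.linearYonedaObj R Y).d ((ComplexShape.up ℕ).prev n) n).hom y = f.1 := by
  cases n with
  | zero =>
    refine (P.extMk_zero_eq_zero_iff f.1 f.2).trans
      ⟨fun h => ⟨0, by rw [map_zero]; exact h.symm⟩, ?_⟩
    rintro ⟨y, hy⟩
    rw [(P.complex.linearYonedaObj R Y).shape _ _ (by simp)] at hy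
    exact hy.symm
  | succ n =>
    rw [show (ComplexShape.up ℕ).prev (n + 1) = n by simp]
    exact P.extMk_eq_zero_iff f.1 _ rfl f.2 n rfl

variable (X) in
/-- Comparison of the two definitions of `Ext`. -/
noncomputable def extLinearEquiv (n : ℕ) :
    ((_root_.Ext R (ModuleCat.{u} R) n).obj (Opposite.op X)).obj Y ≃ₗ[R] Abelian.Ext X Y n :=
  ((projectiveResolution X).isoExt n Y).toLinearEquiv ≪≫ₗ
    LinearMap.equivOfKerEq (CochainComplex.cocycleToHomology _ n)
      ((projectiveResolution X).cocycleToExt Y n) (CochainComplex.cocycleToHomology_surjective _ n)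
      (cocycleToExt_surjective _ _ n) (by
        ext f
        rw [LinearMap.mem_ker, LinearMap.mem_ker, CochainComplex.cocycleToHomology_eq_zero_iff,
          cocycleToExt_eq_zero_iff])

lemma extLinearEquiv_eq (n : ℕ)
    (x : ((_root_.Ext R (ModuleCat.{u} R) n).obj (Opposite.op X)).obj Y)
    (f : LinearMap.ker (((projectiveResolution X).complex.linearYonedaObj R Y).d n (n + 1)).hom)
    (h : ((projectiveResolution X).isoExt n Y).hom.hom x =
      CochainComplex.cocycleToHomology _ n f) :
    extLinearEquiv X Y n x = (projectiveResolution X).cocycleToExt Y n f :=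
  (congrArg _ h).trans (LinearMap.equivOfKerEq_apply _ _ _ (cocycleToExt_surjective _ _ n) _ f)

lemma extLinearEquiv_naturality {X X' : ModuleCat.{u} R} (g : X' ⟶ X) (n : ℕ)
    (x : ((_root_.Ext R (ModuleCat.{u} R) n).obj (Opposite.op X)).obj Y) :
    extLinearEquiv X' Y n ((((_root_.Ext R (ModuleCat.{u} R) n).map g.op).app Y).hom x) =
      (Ext.mk₀ g).comp (extLinearEquiv X Y n x) (zero_add n) := by
  let φ : Hom (projectiveResolution X') (projectiveResolution X) g :=
    { hom := lift g _ _
      hom_f_zero_comp_π_f_zero := lift_commutes_zero g _ _ }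
  have h := ConcreteCategory.congr_hom (isoExt_hom_naturality (R := R) φ n Y) x
  obtain ⟨f, hf⟩ := CochainComplex.cocycleToHomology_surjective _ n
    (((projectiveResolution X).isoExt n Y).hom.hom x)
  let f' : LinearMap.ker
      (((projectiveResolution X').complex.linearYonedaObj R Y).d n (n + 1)).hom :=
    ⟨φ.hom.f n ≫ f.1, by
      exact (φ.hom.comm_assoc (n + 1) n f.1).symm.trans <|
        (congrArg (fun y => φ.hom.f (n + 1) ≫ y) f.2).trans <|
        Limits.comp_zero⟩
  have h' := CochainComplex.homologyMap_cocycleToHomology (linearYonedaObjMap R φ Y) n f f' rfl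
  rw [hf] at h'
  have h2 := h.trans h'
  rw [extLinearEquiv_eq Y n _ f hf.symm]
  exact (extLinearEquiv_eq Y n _ f' h2).trans
    ((projectiveResolution X).mk₀_comp_extMk f.1 _ rfl f.2 φ).symm

end CategoryTheory.ProjectiveResolution

namespace CategoryTheory.InjectiveResolution
open Abelian
section
variable {C : Type u} [Category.{v} C] [Abelian C] [HasExt.{v} C]
  {X Y : C} (I : InjectiveResolution Y)

lemma extMk_zero_eq_zero_iff (f : X ⟶ I.cocomplex.X 0) (hf : f ≫ I.cocomplex.d 0 1 = 0) :
    I.extMk f 1 rfl hf = 0 ↔ f = 0 := by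
  refine ⟨fun h => ?_, ?_⟩
  · simp only [← I.extEquivCohomologyClass.apply_eq_iff_eq,
      extEquivCohomologyClass_extMk, extEquivCohomologyClass_zero,
      CochainComplex.HomComplex.CohomologyClass.mk_eq_zero_iff] at h
    rw [CochainComplex.HomComplex.Cocycle.fromSingleMk_mem_coboundaries_iff _ _ _ _ _ (-1)
      (by lia)] at h
    obtain ⟨g, hg⟩ := h
    have hz : Limits.IsZero (I.cochainComplex.X (-1)) :=
      I.cochainComplex.isZero_of_isStrictlyGE 0 (-1) (by lia)
    rw [hz.eq_of_tgt g 0] at hg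
    simpa using hg.symm
  · rintro rfl
    simp

lemma extMk_eq_zero_iff' {n : ℕ} (f : X ⟶ I.cocomplex.X n)
    (hf : f ≫ I.cocomplex.d n (n + 1) = 0) :
    I.extMk f (n + 1) rfl hf = 0 ↔
      ∃ g : X ⟶ I.cocomplex.X ((ComplexShape.up ℕ).prev n), g ≫ I.cocomplex.d _ n = f := by
  cases n with
  | zero =>
    refine (I.extMk_zero_eq_zero_iff f hf).trans
      ⟨fun h => ⟨0, by rw [Limits.zero_comp, h]⟩, ?_⟩
    rintro ⟨y, hy⟩
    rw [I.cocomplex.shape _ _ (by simp), Limits.comp_zero] at hy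
    exact hy.symm
  | succ n =>
    rw [show (ComplexShape.up ℕ).prev (n + 1) = n by simp]
    exact I.extMk_eq_zero_iff f _ rfl hf n rfl
end

variable {R : Type u} [CommRing R] {M : ModuleCat.{u} R} (I : InjectiveResolution M)

/-- The class in `Ext X M n` of a morphism from `X` to the cocycles of an injective resolution. -/
noncomputable def cocycleToExt (X : ModuleCat.{u} R) (n : ℕ) :
    LinearMap.ker (Linear.rightComp R X (I.cocomplex.d n (n + 1))) →ₗ[R] Abelian.Ext X M n where
  toFun f := I.extMk f.1 (n + 1) rfl f.2
  map_add' f g := (I.add_extMk _ _ _ _ _ _).symm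
  map_smul' r f := by
    have := (I.mk₀_comp_extMk f.1 _ rfl f.2 (r • 𝟙 X)).symm
    simp only [Ext.mk₀_smul, Ext.smul_comp, Ext.mk₀_id_comp, Linear.smul_comp,
      Category.id_comp] at this
    exact this

variable (X : ModuleCat.{u} R) (n : ℕ)

lemma cocycleToExt_surjective : Function.Surjective (I.cocycleToExt X n) := by
  intro α
  obtain ⟨f, hf, rfl⟩ := I.extMk_surjective α (n + 1) rfl
  exact ⟨⟨f, hf⟩, rfl⟩

variable {n}
lemma cocycleToExt_eq_zero_iff
    (f : LinearMap.ker (Linear.rightComp R X (I.cocomplex.d n (n + 1)))) :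
    I.cocycleToExt X n f = 0 ↔ ∃ g : X ⟶ I.cocomplex.X ((ComplexShape.up ℕ).prev n),
      g ≫ I.cocomplex.d _ n = f.1 :=
  I.extMk_eq_zero_iff' f.1 f.2

end CategoryTheory.InjectiveResolution

section colim
open Limits
variable {R : Type u} [CommRing R] {J : Type} [SmallCategory J] [IsFiltered J]
  {F : J ⥤ ModuleCat.{u} R} {c : Cocone F}

lemma ModuleCat.bijective_desc_of_isFiltered (hc : IsColimit c) (s : Cocone F)
    (hsurj : ∀ y : s.pt, ∃ j x, (s.ι.app j).hom x = y)
    (hinj : ∀ j x, (s.ι.app j).hom x = 0 → ∃ k, ∃ f : j ⟶ k, (F.map f).hom x = 0) :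
    Function.Bijective (hc.desc s).hom := by
  have fac (j x) : (hc.desc s).hom ((c.ι.app j).hom x) = (s.ι.app j).hom x :=
    ConcreteCategory.congr_hom (hc.fac s j) x
  have : PreservesFilteredColimitsOfSize.{0, 0} (forget (ModuleCat.{u} R)) :=
    preservesFilteredColimitsOfSize_shrink.{0, u, 0, u} _
  constructor
  · rw [injective_iff_map_eq_zero]
    intro x hx
    obtain ⟨j, x, rfl⟩ := Concrete.isColimit_exists_rep F hc x
    change (hc.desc s).hom ((c.ι.app j).hom x) = 0 at hx
    rw [fac] at hx
    obtain ⟨k, f, hf⟩ := hinj j x hx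
    change (c.ι.app j).hom x = 0
    rw [← c.w f]
    change (c.ι.app k).hom ((F.map f).hom x) = 0
    rw [hf, map_zero]
  · intro y
    obtain ⟨j, x, rfl⟩ := hsurj y
    exact ⟨_, fac j x⟩

end colim

namespace LinearMap
variable {R Z A B : Type*} [Ring R] [AddCommGroup Z] [AddCommGroup A] [AddCommGroup B]
  [Module R Z] [Module R A] [Module R B]

/-- A linear map out of `Z` descends along a surjection whose kernel it kills. -/
noncomputable def descOfKerLE (α : Z →ₗ[R] A) (β : Z →ₗ[R] B) (hα : Function.Surjective α)
    (h : ker α ≤ ker β) : A →ₗ[R] B :=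
  (ker α).liftQ β h ∘ₗ (α.quotKerEquivOfSurjective hα).symm.toLinearMap

@[simp]
lemma descOfKerLE_apply (α : Z →ₗ[R] A) (β : Z →ₗ[R] B) (hα : Function.Surjective α)
    (h : ker α ≤ ker β) (z : Z) : descOfKerLE α β hα h (α z) = β z := by
  have : (α.quotKerEquivOfSurjective hα).symm (α z) = Submodule.Quotient.mk z := by
    rw [LinearEquiv.symm_apply_eq]; rfl
  simp [descOfKerLE, this]

end LinearMap

section torsion
variable {R : Type*} [CommRing R] (𝔞 : Ideal R) (E : Type*) [AddCommGroup E] [Module R E]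

/-- The submodule `Γ_𝔞(E)` of elements killed by some power of `𝔞`. -/
def idealTorsion : Submodule R E where
  carrier := {x | ∃ k : ℕ, ∀ a ∈ 𝔞 ^ k, a • x = 0}
  zero_mem' := ⟨0, fun a _ => smul_zero a⟩
  add_mem' := by
    rintro x y ⟨k, hk⟩ ⟨l, hl⟩
    refine ⟨max k l, fun a ha => ?_⟩
    rw [smul_add, hk a (Ideal.pow_le_pow_right (le_max_left k l) ha),
      hl a (Ideal.pow_le_pow_right (le_max_right k l) ha), add_zero]
  smul_mem' := by
    rintro r x ⟨k, hk⟩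
    exact ⟨k, fun a ha => by rw [smul_comm, hk a ha, smul_zero]⟩

variable {𝔞 E}
lemma map_mem_idealTorsion {E' : Type*} [AddCommGroup E'] [Module R E'] (f : E →ₗ[R] E') {x : E}
    (hx : x ∈ idealTorsion 𝔞 E) : f x ∈ idealTorsion 𝔞 E' := by
  obtain ⟨k, hk⟩ := hx
  exact ⟨k, fun a ha => by rw [← map_smul, hk a ha, map_zero]⟩

end torsion

namespace CategoryTheory.InjectiveResolution
open Abelian
variable {R : Type u} [CommRing R] {M : ModuleCat.{u} R} (I : InjectiveResolution M)
  (𝔞 : Ideal R) (n : ℕ)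

/-- The cocycles of the complex `Γ_𝔞(I)`. -/
def torsionCocycles : Submodule R (I.cocomplex.X n) :=
  idealTorsion 𝔞 (I.cocomplex.X n) ⊓ LinearMap.ker (I.cocomplex.d n (n + 1)).hom

/-- The coboundaries of the complex `Γ_𝔞(I)`. -/
noncomputable def torsionBoundaries : Submodule R (I.cocomplex.X n) :=
  (idealTorsion 𝔞 (I.cocomplex.X ((ComplexShape.up ℕ).prev n))).map (I.cocomplex.d _ n).hom

lemma torsionBoundaries_le : I.torsionBoundaries 𝔞 n ≤ I.torsionCocycles 𝔞 n := by
  rintro _ ⟨y, hy, rfl⟩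
  refine ⟨map_mem_idealTorsion _ hy, ?_⟩
  exact congrArg (fun f : _ ⟶ I.cocomplex.X (n + 1) => f.hom y) (I.cocomplex.d_comp_d _ n (n + 1))

/-- The cohomology of the complex `Γ_𝔞(I)`. -/
abbrev TorsionCohomology : Type u :=
  I.torsionCocycles 𝔞 n ⧸ (I.torsionBoundaries 𝔞 n).submoduleOf (I.torsionCocycles 𝔞 n)

lemma hom_comp_d_apply_eq_zero {X : ModuleCat.{u} R}
    (f : LinearMap.ker (Linear.rightComp R X (I.cocomplex.d n (n + 1)))) (x : X) :
    (I.cocomplex.d n (n + 1)).hom (f.1.hom x) = 0 :=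
  congrArg (fun g : X ⟶ I.cocomplex.X (n + 1) => g.hom x) f.2

lemma apply_one_mem_idealTorsion {E : ModuleCat.{u} R} (k : ℕ)
    (f : ModuleCat.of R (R ⧸ 𝔞 ^ k) ⟶ E) : f.hom (1 : R ⧸ 𝔞 ^ k) ∈ idealTorsion 𝔞 E := by
  refine ⟨k, fun a ha => ?_⟩
  rw [← map_smul]
  have : a • (1 : R ⧸ 𝔞 ^ k) = 0 := by
    rw [Algebra.smul_def, mul_one]
    exact Ideal.Quotient.eq_zero_iff_mem.2 ha
  exact (congrArg f.hom this).trans (map_zero _)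

/-- Evaluation at `1`. -/
noncomputable def cocycleEval (k : ℕ) :
    LinearMap.ker (Linear.rightComp R (ModuleCat.of R (R ⧸ 𝔞 ^ k)) (I.cocomplex.d n (n + 1)))
      →ₗ[R] I.torsionCocycles 𝔞 n where
  toFun f := ⟨f.1.hom (1 : R ⧸ 𝔞 ^ k), apply_one_mem_idealTorsion 𝔞 k f.1,
    I.hom_comp_d_apply_eq_zero n f _⟩
  map_add' _ _ := rfl
  map_smul' _ _ := rfl

/-- The map from `Ext (R ⧸ 𝔞 ^ k) M n` to the cohomology of `Γ_𝔞(I)`. -/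
noncomputable def extToTorsionCohomology (k : ℕ) :
    Abelian.Ext (ModuleCat.of R (R ⧸ 𝔞 ^ k)) M n →ₗ[R] I.TorsionCohomology 𝔞 n :=
  LinearMap.descOfKerLE (I.cocycleToExt _ n) (Submodule.mkQ _ ∘ₗ I.cocycleEval 𝔞 n k)
    (I.cocycleToExt_surjective _ n) (by
      intro f hf
      obtain ⟨g, hg⟩ := (I.cocycleToExt_eq_zero_iff _ f).1 hf
      refine (Submodule.Quotient.mk_eq_zero _).2
        ⟨g.hom (1 : R ⧸ 𝔞 ^ k), apply_one_mem_idealTorsion 𝔞 k g, ?_⟩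
      change _ = f.1.hom (1 : R ⧸ 𝔞 ^ k)
      rw [← hg]; rfl)

lemma extToTorsionCohomology_cocycleToExt (k : ℕ)
    (f : LinearMap.ker (Linear.rightComp R (ModuleCat.of R (R ⧸ 𝔞 ^ k))
      (I.cocomplex.d n (n + 1)))) :
    I.extToTorsionCohomology 𝔞 n k (I.cocycleToExt _ n f) =
      Submodule.Quotient.mk (I.cocycleEval 𝔞 n k f) :=
  LinearMap.descOfKerLE_apply _ _ _ _ _

/-- The transition map `R ⧸ 𝔞 ^ l ⟶ R ⧸ 𝔞 ^ k`. -/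
noncomputable abbrev quotPow {𝔞 : Ideal R} {k l : ℕ} (h : k ≤ l) :
    ModuleCat.of R (R ⧸ 𝔞 ^ l) ⟶ ModuleCat.of R (R ⧸ 𝔞 ^ k) :=
  ModuleCat.ofHom (Submodule.mapQ _ _ LinearMap.id (Ideal.pow_le_pow_right h))

lemma mk₀_comp_cocycleToExt {X X' : ModuleCat.{u} R} (g : X' ⟶ X)
    (f : LinearMap.ker (Linear.rightComp R X (I.cocomplex.d n (n + 1)))) :
    (Ext.mk₀ g).comp (I.cocycleToExt X n f) (zero_add n) =
      I.cocycleToExt X' n ⟨g ≫ f.1, by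
        have := f.2
        simp only [LinearMap.mem_ker, Linear.rightComp_apply] at this ⊢
        rw [Category.assoc, this, Limits.comp_zero]⟩ :=
  I.mk₀_comp_extMk f.1 _ rfl f.2 g

lemma extToTorsionCohomology_naturality {k l : ℕ} (h : k ≤ l)
    (x : Abelian.Ext (ModuleCat.of R (R ⧸ 𝔞 ^ k)) M n) :
    I.extToTorsionCohomology 𝔞 n l ((Ext.mk₀ (quotPow h)).comp x (zero_add n)) =
      I.extToTorsionCohomology 𝔞 n k x := by
  obtain ⟨f, rfl⟩ := I.cocycleToExt_surjective _ _ x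
  rw [mk₀_comp_cocycleToExt, extToTorsionCohomology_cocycleToExt,
    extToTorsionCohomology_cocycleToExt]
  rfl

lemma exists_extToTorsionCohomology_eq (y : I.TorsionCohomology 𝔞 n) :
    ∃ k x, I.extToTorsionCohomology 𝔞 n k x = y := by
  obtain ⟨⟨y, ⟨k, hk⟩, hy⟩, rfl⟩ := Submodule.Quotient.mk_surjective _ y
  let f : ModuleCat.of R (R ⧸ 𝔞 ^ k) ⟶ I.cocomplex.X n := ModuleCat.ofHom
    (Submodule.liftQ (𝔞 ^ k) (LinearMap.toSpanSingleton R _ y) hk)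
  refine ⟨k, I.cocycleToExt _ n ⟨f, ?_⟩, ?_⟩
  · rw [LinearMap.mem_ker, Linear.rightComp_apply]
    ext
    change (I.cocomplex.d n (n + 1)).hom ((1 : R) • y) = 0
    rw [one_smul]
    exact hy
  · rw [extToTorsionCohomology_cocycleToExt]
    congr 1
    exact Subtype.ext (one_smul R y)

lemma exists_mk₀_comp_eq_zero (k : ℕ) (x : Abelian.Ext (ModuleCat.of R (R ⧸ 𝔞 ^ k)) M n)
    (hx : I.extToTorsionCohomology 𝔞 n k x = 0) :
    ∃ l, ∃ h : k ≤ l, (Ext.mk₀ (quotPow h)).comp x (zero_add n) = 0 := by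
  obtain ⟨f, rfl⟩ := I.cocycleToExt_surjective _ _ x
  rw [extToTorsionCohomology_cocycleToExt, Submodule.Quotient.mk_eq_zero] at hx
  obtain ⟨y, ⟨m, hm⟩, hy⟩ := hx
  refine ⟨max k m, le_max_left _ _, ?_⟩
  rw [mk₀_comp_cocycleToExt, cocycleToExt_eq_zero_iff]
  refine ⟨ModuleCat.ofHom (Submodule.liftQ (𝔞 ^ max k m) (LinearMap.toSpanSingleton R _ y)
    fun a ha => hm a (Ideal.pow_le_pow_right (le_max_right k m) ha)), ?_⟩
  ext
  change (I.cocomplex.d _ n).hom ((1 : R) • y) = f.1.hom (1 : R ⧸ 𝔞 ^ k)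
  rw [one_smul]
  exact hy

open Limits in
/-- Local cohomology is computed by `Γ_𝔞(I)`. -/
theorem nonempty_localCohomology_linearEquiv :
    Nonempty ((localCohomology 𝔞 n).obj M ≃ₗ[R] I.TorsionCohomology 𝔞 n) := by
  let G := localCohomology.diagram (localCohomology.idealPowersDiagram 𝔞) n
  have := localCohomology.hasColimitDiagram (localCohomology.idealPowersDiagram 𝔞) n
  let hc := isColimitOfPreserves ((evaluation _ _).obj M) (colimit.isColimit G)
  let s : Cocone (G ⋙ (evaluation _ _).obj M) :=
    { pt := ModuleCat.of R (I.TorsionCohomology 𝔞 n)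
      ι :=
        { app j := ModuleCat.ofHom (I.extToTorsionCohomology 𝔞 n j.unop.unop ∘ₗ
            (ProjectiveResolution.extLinearEquiv _ M n).toLinearMap)
          naturality j k f := by
            ext x
            refine (congrArg (I.extToTorsionCohomology 𝔞 n k.unop.unop)
              (ProjectiveResolution.extLinearEquiv_naturality M _ n x)).trans ?_
            exact I.extToTorsionCohomology_naturality 𝔞 n f.unop.unop.down.down _ } }
  refine ⟨LinearEquiv.ofBijective (hc.desc s).hom
    (ModuleCat.bijective_desc_of_isFiltered hc s ?_ ?_)⟩
  · intro y
    obtain ⟨k, x, hx⟩ := I.exists_extToTorsionCohomology_eq 𝔞 n y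
    refine ⟨Opposite.op (Opposite.op k), (ProjectiveResolution.extLinearEquiv _ M n).symm x, ?_⟩
    exact (congrArg _ (LinearEquiv.apply_symm_apply _ _)).trans hx
  · intro j x hx
    obtain ⟨l, h, hl⟩ := I.exists_mk₀_comp_eq_zero 𝔞 n j.unop.unop _ hx
    refine ⟨Opposite.op (Opposite.op l), (homOfLE h).op.op, ?_⟩
    apply (ProjectiveResolution.extLinearEquiv _ M n).injective
    refine (ProjectiveResolution.extLinearEquiv_naturality M _ n x).trans ?_
    exact hl.trans (LinearEquiv.map_zero _).symm

end CategoryTheory.InjectiveResolution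

section
variable {R : Type u} [CommRing R]

lemma exists_pow_smul_eq_zero_of_fg (𝔞 : Ideal R) {E : Type*} [AddCommGroup E] [Module R E]
    (N : Submodule R E) (hN : N.FG) (h : N ≤ idealTorsion 𝔞 E) :
    ∃ k : ℕ, ∀ x ∈ N, ∀ a ∈ 𝔞 ^ k, a • x = 0 := by
  induction N, hN using Submodule.fg_induction with
  | singleton x =>
    obtain ⟨k, hk⟩ := h (Submodule.mem_span_singleton_self x)
    refine ⟨k, fun y hy a ha => ?_⟩
    obtain ⟨r, rfl⟩ := Submodule.mem_span_singleton.1 hy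
    rw [smul_comm, hk a ha, smul_zero]
  | sup N₁ N₂ _ _ h₁ h₂ =>
    obtain ⟨k, hk⟩ := h₁ (le_sup_left.trans h)
    obtain ⟨l, hl⟩ := h₂ (le_sup_right.trans h)
    refine ⟨max k l, fun z hz a ha => ?_⟩
    obtain ⟨x, hx, y, hy, rfl⟩ := Submodule.mem_sup.1 hz
    rw [smul_add, hk x hx a (Ideal.pow_le_pow_right (le_max_left k l) ha),
      hl y hy a (Ideal.pow_le_pow_right (le_max_right k l) ha), add_zero]

variable [IsNoetherianRing R] (𝔞 : Ideal R) (E : Type u) [AddCommGroup E] [Module R E]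

theorem injective_idealTorsion [Module.Injective R E] :
    Module.Injective R (idealTorsion 𝔞 E) := by
  refine Module.Baer.injective fun J g => ?_
  have hfg : (LinearMap.range ((idealTorsion 𝔞 E).subtype ∘ₗ g)).FG :=
    LinearMap.range_eq_map (R := R) ((idealTorsion 𝔞 E).subtype ∘ₗ g) ▸
      (Module.Finite.fg_top (R := R) (M := J)).map _
  obtain ⟨k, hk⟩ := exists_pow_smul_eq_zero_of_fg 𝔞 _ hfg (by
    rintro _ ⟨x, rfl⟩
    exact (g x).2)
  obtain ⟨c, hc⟩ := Ideal.exists_pow_inf_eq_pow_smul 𝔞 J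
  let φ : J →ₗ[R] R ⧸ 𝔞 ^ (c + k) := Submodule.mkQ (𝔞 ^ (c + k)) ∘ₗ J.subtype
  have hφ : LinearMap.ker φ.rangeRestrict ≤ LinearMap.ker ((idealTorsion 𝔞 E).subtype ∘ₗ g) := by
    rw [LinearMap.ker_rangeRestrict]
    intro x hx
    have hx1 : (x : R) ∈ 𝔞 ^ (c + k) := (Submodule.Quotient.mk_eq_zero _).1 hx
    have hx2 : (x : R) ∈ 𝔞 ^ k • J := by
      have : (x : R) ∈ 𝔞 ^ (c + k) • ⊤ ⊓ J := ⟨by simpa using hx1, x.2⟩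
      rw [hc (c + k) (by lia), Nat.add_sub_cancel_left] at this
      exact Submodule.smul_mono le_rfl inf_le_right this
    have key : ∀ y (hy : y ∈ 𝔞 ^ k • J), (g ⟨y, Submodule.smul_le_right hy⟩ : E) = 0 := by
      intro y hy
      induction hy using Submodule.smul_induction_on' with
      | smul r hr n hn =>
        refine Eq.trans ?_ (hk (g ⟨n, hn⟩) ⟨⟨n, hn⟩, rfl⟩ r hr)
        rw [← Submodule.coe_smul, ← map_smul]; rfl
      | add x hx y hy hx' hy' =>
        refine Eq.trans ?_ ((congrArg₂ (· + ·) hx' hy').trans (add_zero 0))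
        rw [← Submodule.coe_add, ← map_add]; rfl
    exact key x hx2
  obtain ⟨h, hh⟩ := Module.Injective.out (LinearMap.range φ).subtype
    (Submodule.injective_subtype _)
    (LinearMap.descOfKerLE φ.rangeRestrict _ φ.surjective_rangeRestrict hφ)
  refine ⟨(h ∘ₗ Submodule.mkQ (𝔞 ^ (c + k))).codRestrict (idealTorsion 𝔞 E) fun r =>
    ⟨c + k, fun a ha => ?_⟩, fun x hx => Subtype.ext ?_⟩
  · rw [← map_smul, LinearMap.comp_apply]
    have : (Submodule.mkQ (𝔞 ^ (c + k))) (a • r) = 0 := by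
      rw [Submodule.mkQ_apply, Submodule.Quotient.mk_eq_zero]
      exact Ideal.mul_mem_right _ _ ha
    rw [this, map_zero]
  · exact (hh (φ.rangeRestrict ⟨x, hx⟩)).trans (LinearMap.descOfKerLE_apply _ _ _ _ _)
end

namespace CategoryTheory.ShortComplex.ShortExact
open Abelian
variable {R : Type u} [CommRing R] {S : ShortComplex (ModuleCat.{u} R)} (hS : S.ShortExact)
  (X : ModuleCat.{u} R)

lemma subsingleton_ext_X₂ (hS : S.ShortExact) (n : ℕ) [Subsingleton (Ext X S.X₁ n)]
    [Subsingleton (Ext X S.X₃ n)] :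
    Subsingleton (Ext X S.X₂ n) := by
  refine subsingleton_of_forall_eq 0 fun x => ?_
  obtain ⟨y, rfl⟩ := Ext.covariant_sequence_exact₂ X hS x (Subsingleton.elim _ _)
  rw [Subsingleton.elim y 0, Ext.zero_comp]

lemma nonempty_ext_X₂_linearEquiv (hS : S.ShortExact) (n : ℕ) [Subsingleton (Ext X S.X₁ n)]
    [Subsingleton (Ext X S.X₁ (n + 1))] : Nonempty (Ext X S.X₂ n ≃ₗ[R] Ext X S.X₃ n) := by
  refine ⟨.ofBijective ((Ext.mk₀ S.g).postcompOfLinear R X (add_zero n)) ⟨?_, fun x => ?_⟩⟩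
  · refine (injective_iff_map_eq_zero _).2 fun x hx => ?_
    obtain ⟨y, rfl⟩ := Ext.covariant_sequence_exact₂ X hS x hx
    rw [Subsingleton.elim y 0, Ext.zero_comp]
  · exact Ext.covariant_sequence_exact₃ X hS x rfl (Subsingleton.elim _ _)

lemma nonempty_ext_X₁_linearEquiv (hS : S.ShortExact) (n : ℕ) [Subsingleton (Ext X S.X₃ n)]
    [Subsingleton (Ext X S.X₃ (n + 1))] :
    Nonempty (Ext X S.X₁ (n + 1) ≃ₗ[R] Ext X S.X₂ (n + 1)) := by
  refine ⟨.ofBijective ((Ext.mk₀ S.f).postcompOfLinear R X (add_zero (n + 1))) ⟨?_, fun x => ?_⟩⟩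
  · refine (injective_iff_map_eq_zero _).2 fun x hx => ?_
    obtain ⟨y, rfl⟩ := Ext.covariant_sequence_exact₁ X hS x hx rfl
    rw [Subsingleton.elim y 0, Ext.zero_comp]
  · exact Ext.covariant_sequence_exact₂ X hS x (Subsingleton.elim _ _)

lemma nonempty_ext_X₃_linearEquiv (hS : S.ShortExact) [Injective S.X₂] (n : ℕ) :
    Nonempty (Ext X S.X₃ (n + 1) ≃ₗ[R] Ext X S.X₁ (n + 2)) := by
  refine ⟨.ofBijective (hS.extClass.postcompOfLinear R X rfl) ⟨?_, fun x => ?_⟩⟩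
  · refine (injective_iff_map_eq_zero _).2 fun x hx => ?_
    obtain ⟨y, rfl⟩ := Ext.covariant_sequence_exact₃ X hS x rfl hx
    rw [Ext.eq_zero_of_injective y, Ext.zero_comp]
  · exact Ext.covariant_sequence_exact₁ X hS x (Ext.eq_zero_of_injective _) rfl

/-- The connecting map out of degree zero. -/
noncomputable def homToExtOne : (X ⟶ S.X₃) →ₗ[R] Ext X S.X₁ 1 :=
  hS.extClass.postcompOfLinear R X (zero_add 1) ∘ₗ (Ext.linearEquiv₀ (R := R)).symm.toLinearMap

lemma homToExtOne_surjective [Injective S.X₂] : Function.Surjective (hS.homToExtOne X) := by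
  intro x
  obtain ⟨y, rfl⟩ := Ext.covariant_sequence_exact₁ X hS x (Ext.eq_zero_of_injective _) (zero_add 1)
  refine ⟨Ext.linearEquiv₀ (R := R) y, ?_⟩
  simp [homToExtOne]

variable {X}
lemma homToExtOne_eq_zero_iff (f : X ⟶ S.X₃) :
    hS.homToExtOne X f = 0 ↔ ∃ g : X ⟶ S.X₂, g ≫ S.g = f := by
  constructor
  · intro h
    obtain ⟨y, hy⟩ := Ext.covariant_sequence_exact₃ X hS (Ext.mk₀ f) (zero_add 1) h
    obtain ⟨g, rfl⟩ := (Ext.mk₀_bijective _ _).2 y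
    rw [Ext.mk₀_comp_mk₀] at hy
    exact ⟨g, (Ext.mk₀_bijective _ _).1 hy⟩
  · rintro ⟨g, rfl⟩
    change (Ext.mk₀ (g ≫ S.g)).comp hS.extClass (zero_add 1) = 0
    rw [← Ext.mk₀_comp_mk₀, Ext.comp_assoc_of_second_deg_zero, hS.comp_extClass, Ext.comp_zero]

lemma exists_lift_of_subsingleton_ext (hS : S.ShortExact) [Subsingleton (Ext X S.X₁ 1)]
    (f : X ⟶ S.X₃) :
    ∃ g : X ⟶ S.X₂, g ≫ S.g = f :=
  (hS.homToExtOne_eq_zero_iff f).1 (Subsingleton.elim _ _)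

end CategoryTheory.ShortComplex.ShortExact

namespace CategoryTheory.InjectiveResolution
open Abelian
variable {R : Type u} [CommRing R] {M : ModuleCat.{u} R} (I : InjectiveResolution M)
  (𝔞 : Ideal R) (n : ℕ)

variable {𝔞 n} in
lemma mem_torsionBoundaries_succ {x : I.cocomplex.X (n + 1)} :
    x ∈ I.torsionBoundaries 𝔞 (n + 1) ↔
      ∃ y ∈ idealTorsion 𝔞 (I.cocomplex.X n), (I.cocomplex.d n (n + 1)).hom y = x := by
  have (m : ℕ) (hm : (ComplexShape.up ℕ).prev (n + 1) = m) :
      x ∈ I.torsionBoundaries 𝔞 (n + 1) ↔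
        ∃ y ∈ idealTorsion 𝔞 (I.cocomplex.X m), (I.cocomplex.d m (n + 1)).hom y = x := by
    subst hm; rfl
  exact this n (by simp)

lemma torsionBoundaries_zero : I.torsionBoundaries 𝔞 0 = ⊥ := by
  rw [torsionBoundaries, I.cocomplex.shape _ _ (by simp)]
  exact Submodule.map_zero _

/-- The sequence `0 ⟶ Zⁿ ⟶ Γ_𝔞(Iⁿ) ⟶ Bⁿ⁺¹ ⟶ 0`. -/
noncomputable abbrev cocyclesSequence : ShortComplex (ModuleCat.{u} R) where
  X₁ := ModuleCat.of R (I.torsionCocycles 𝔞 n)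
  X₂ := ModuleCat.of R (idealTorsion 𝔞 (I.cocomplex.X n))
  X₃ := ModuleCat.of R (I.torsionBoundaries 𝔞 (n + 1))
  f := ModuleCat.ofHom (Submodule.inclusion inf_le_left)
  g := ModuleCat.ofHom ((I.cocomplex.d n (n + 1)).hom.restrict
    fun x hx => I.mem_torsionBoundaries_succ.2 ⟨x, hx, rfl⟩)
  zero := by ext x; exact x.2.2

lemma shortExact_cocyclesSequence : (I.cocyclesSequence 𝔞 n).ShortExact := by
  refine ModuleCat.shortComplex_shortExact _ (fun x => ?_)
    (Submodule.inclusion_injective (inf_le_left :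
      I.torsionCocycles 𝔞 n ≤ idealTorsion 𝔞 (I.cocomplex.X n))) ?_
  · constructor
    · intro hx
      exact ⟨⟨x.1, x.2, congrArg Subtype.val hx⟩, rfl⟩
    · rintro ⟨y, rfl⟩
      exact Subtype.ext y.2.2
  · rintro ⟨x, hx⟩
    obtain ⟨y, hy, rfl⟩ := I.mem_torsionBoundaries_succ.1 hx
    exact ⟨⟨y, hy⟩, rfl⟩

instance [IsNoetherianRing R] : Injective (I.cocyclesSequence 𝔞 n).X₂ := by
  have : Injective (ModuleCat.of R (I.cocomplex.X n)) := I.injective n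
  have : Module.Injective R (I.cocomplex.X n) :=
    Module.injective_module_of_injective_object R _
  have := injective_idealTorsion 𝔞 (I.cocomplex.X n)
  exact (Module.injective_iff_injective_object R _).1 this

/-- The sequence `0 ⟶ Bⁿ ⟶ Zⁿ ⟶ Hⁿ ⟶ 0`. -/
noncomputable abbrev cohomologySequence : ShortComplex (ModuleCat.{u} R) where
  X₁ := ModuleCat.of R (I.torsionBoundaries 𝔞 n)
  X₂ := ModuleCat.of R (I.torsionCocycles 𝔞 n)
  X₃ := ModuleCat.of R (I.TorsionCohomology 𝔞 n)
  f := ModuleCat.ofHom (Submodule.inclusion (I.torsionBoundaries_le 𝔞 n))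
  g := ModuleCat.ofHom (Submodule.mkQ _)
  zero := by ext x; exact (Submodule.Quotient.mk_eq_zero _).2 x.2

lemma shortExact_cohomologySequence : (I.cohomologySequence 𝔞 n).ShortExact := by
  refine ModuleCat.shortComplex_shortExact _ (fun x => ?_)
    (Submodule.inclusion_injective (I.torsionBoundaries_le 𝔞 n))
    (Submodule.mkQ_surjective _)
  refine (Submodule.Quotient.mk_eq_zero _).trans ?_
  exact ⟨fun hx => ⟨⟨x.1, hx⟩, rfl⟩, by rintro ⟨y, rfl⟩; exact y.2⟩

section vanishing
variable {𝔞} [IsNoetherianRing R] {X : ModuleCat.{u} R}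

lemma subsingleton_ext_torsionBoundaries {t T : ℕ}
    (h : ∀ n < t, ∀ k, k + n = T →
      Subsingleton (Ext X (ModuleCat.of R (I.TorsionCohomology 𝔞 n)) k))
    (hn : n ≤ t) (k : ℕ) (hk : k + 1 + n = T) :
    Subsingleton (Ext X (ModuleCat.of R (I.torsionBoundaries 𝔞 n)) (k + 1)) := by
  induction n generalizing k with
  | zero =>
    have : Subsingleton (I.torsionBoundaries 𝔞 0) := by
      rw [torsionBoundaries_zero]; infer_instance
    have : Injective (ModuleCat.of R (I.torsionBoundaries 𝔞 0)) :=
      (ModuleCat.isZero_of_subsingleton _).injective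
    exact Ext.subsingleton_of_injective _ _ k
  | succ n ih =>
    obtain ⟨e⟩ := (I.shortExact_cocyclesSequence 𝔞 n).nonempty_ext_X₃_linearEquiv X k
    have h₁ := ih (by lia) (k + 1) (by lia)
    have h₃ := h n (by lia) (k + 2) (by lia)
    have := (I.shortExact_cohomologySequence 𝔞 n).subsingleton_ext_X₂ X (k + 2)
    exact e.toEquiv.subsingleton

lemma subsingleton_ext_torsionCocycles {t T : ℕ}
    (h : ∀ n < t, ∀ k, k + n = T →
      Subsingleton (Ext X (ModuleCat.of R (I.TorsionCohomology 𝔞 n)) k))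
    (hn : n < t) (k : ℕ) (hk : k + 1 + n = T) :
    Subsingleton (Ext X (ModuleCat.of R (I.torsionCocycles 𝔞 n)) (k + 1)) := by
  have h₁ := I.subsingleton_ext_torsionBoundaries n h hn.le k hk
  have h₃ := h n hn (k + 1) hk
  exact (I.shortExact_cohomologySequence 𝔞 n).subsingleton_ext_X₂ X (k + 1)

lemma nonempty_ext_torsionCocycles_linearEquiv {t m : ℕ}
    (h : ∀ n, t < n → ∀ k, k + n = m + 1 →
      Subsingleton (Ext X (ModuleCat.of R (I.TorsionCohomology 𝔞 n)) k))
    (h' : ∀ n, t < n → ∀ k, k + n = m →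
      Subsingleton (Ext X (ModuleCat.of R (I.TorsionCohomology 𝔞 n)) k))
    (k : ℕ) (hn : t ≤ n) (hk : n + k = m) :
    Nonempty (Ext X (ModuleCat.of R (I.torsionCocycles 𝔞 n)) (k + 1) ≃ₗ[R]
      Ext X (ModuleCat.of R (I.torsionCocycles 𝔞 m)) 1) := by
  induction k generalizing n with
  | zero => obtain rfl : n = m := hk; exact ⟨.refl R _⟩
  | succ k ih =>
    obtain ⟨e⟩ := (I.shortExact_cocyclesSequence 𝔞 n).nonempty_ext_X₃_linearEquiv X k
    have h₁ := h' (n + 1) (by lia) k (by lia)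
    have h₃ := h (n + 1) (by lia) (k + 1) (by lia)
    obtain ⟨e'⟩ := (I.shortExact_cohomologySequence 𝔞 (n + 1)).nonempty_ext_X₁_linearEquiv X k
    obtain ⟨e''⟩ := ih (n + 1) (by lia) (by lia)
    exact ⟨(e.symm.trans e').trans e''⟩

end vanishing

end CategoryTheory.InjectiveResolution

namespace CategoryTheory.InjectiveResolution
open Abelian
variable {R : Type u} [CommRing R] {M : ModuleCat.{u} R} (I : InjectiveResolution M)
  {𝔞 : Ideal R} {X : ModuleCat.{u} R} (hX : ∀ a ∈ 𝔞, ∀ x : X, a • x = 0)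

lemma apply_mem_idealTorsion (hX : ∀ a ∈ 𝔞, ∀ x : X, a • x = 0) {E : ModuleCat.{u} R}
    (f : X ⟶ E) (x : X) :
    f.hom x ∈ idealTorsion 𝔞 E := by
  refine ⟨1, fun a ha => ?_⟩
  rw [← map_smul, hX a (by simpa using ha), map_zero]

/-- Morphisms from an `𝔞`-annihilated module to the cocycles of `I` factor through those of
`Γ_𝔞(I)`. -/
noncomputable def cocycleLift (n : ℕ) :
    LinearMap.ker (Linear.rightComp R X (I.cocomplex.d n (n + 1))) →ₗ[R]
      (X ⟶ ModuleCat.of R (I.torsionCocycles 𝔞 n)) where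
  toFun f := ModuleCat.ofHom (f.1.hom.codRestrict (I.torsionCocycles 𝔞 n) fun x =>
    ⟨apply_mem_idealTorsion hX f.1 x, I.hom_comp_d_apply_eq_zero n f x⟩)
  map_add' _ _ := rfl
  map_smul' _ _ := rfl

lemma cocycleLift_surjective (n : ℕ) : Function.Surjective (I.cocycleLift hX n) := by
  intro g
  refine ⟨⟨g ≫ ModuleCat.ofHom (I.torsionCocycles 𝔞 n).subtype, ?_⟩, rfl⟩
  ext x
  exact (g.hom x).2.2

lemma exists_comp_d_iff (n : ℕ)
    (f : LinearMap.ker (Linear.rightComp R X (I.cocomplex.d (n + 1) (n + 1 + 1)))) :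
    (∃ g : X ⟶ I.cocomplex.X ((ComplexShape.up ℕ).prev (n + 1)), g ≫ I.cocomplex.d _ _ = f.1) ↔
      ∃ g : X ⟶ (I.cocyclesSequence 𝔞 n).X₂,
        (g ≫ (I.cocyclesSequence 𝔞 n).g) ≫ (I.cohomologySequence 𝔞 (n + 1)).f =
          I.cocycleLift hX (n + 1) f := by
  have (m : ℕ) (hm : m = n) :
      (∃ g : X ⟶ I.cocomplex.X m, g ≫ I.cocomplex.d m (n + 1) = f.1) ↔
      ∃ g : X ⟶ (I.cocyclesSequence 𝔞 n).X₂,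
        (g ≫ (I.cocyclesSequence 𝔞 n).g) ≫ (I.cohomologySequence 𝔞 (n + 1)).f =
          I.cocycleLift hX (n + 1) f := by
    subst hm
    constructor
    · rintro ⟨g, hg⟩
      refine ⟨ModuleCat.ofHom (g.hom.codRestrict _ (apply_mem_idealTorsion hX g)), ?_⟩
      ext x
      exact congrArg (fun f : X ⟶ I.cocomplex.X (m + 1) => f.hom x) hg
    · rintro ⟨g, hg⟩
      refine ⟨g ≫ ModuleCat.ofHom (idealTorsion 𝔞 (I.cocomplex.X m)).subtype, ?_⟩
      ext x
      exact congrArg (fun f : X ⟶ ModuleCat.of R (I.torsionCocycles 𝔞 (m + 1)) =>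
        (f.hom x).1) hg
  exact this _ (by simp)

lemma nonempty_ext_linearEquiv_hom (hX : ∀ a ∈ 𝔞, ∀ x : X, a • x = 0) (t : ℕ)
    [Subsingleton (Ext X (ModuleCat.of R (I.torsionBoundaries 𝔞 t)) 1)]
    (h : ∀ n, n + 1 = t → Subsingleton (Ext X (ModuleCat.of R (I.torsionCocycles 𝔞 n)) 1)) :
    Nonempty (Ext X M t ≃ₗ[R] Ext X (ModuleCat.of R (I.TorsionCohomology 𝔞 t)) 0) := by
  have hS := I.shortExact_cohomologySequence 𝔞 t
  have := hS.mono_f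
  let β : LinearMap.ker (Linear.rightComp R X (I.cocomplex.d t (t + 1))) →ₗ[R]
      (X ⟶ ModuleCat.of R (I.TorsionCohomology 𝔞 t)) :=
    Linear.rightComp R X (I.cohomologySequence 𝔞 t).g ∘ₗ I.cocycleLift hX t
  have hg : Function.Surjective (Linear.rightComp R X (I.cohomologySequence 𝔞 t).g) :=
    fun f => hS.exists_lift_of_subsingleton_ext f
  have hβ : Function.Surjective β := hg.comp (I.cocycleLift_surjective hX t)
  refine ⟨(LinearMap.equivOfKerEq (I.cocycleToExt X t) β (I.cocycleToExt_surjective X t) hβ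
    ?_).trans (Ext.linearEquiv₀ (R := R)).symm⟩
  ext f
  refine (I.cocycleToExt_eq_zero_iff X f).trans ?_
  have hβf : f ∈ LinearMap.ker β ↔ ∃ b, b ≫ (I.cohomologySequence 𝔞 t).f = I.cocycleLift hX t f :=
    ⟨fun h0 => ⟨hS.exact.lift _ h0, hS.exact.lift_f _ h0⟩, by
      rintro ⟨b, hb⟩
      change I.cocycleLift hX t f ≫ (I.cohomologySequence 𝔞 t).g = 0
      rw [← hb, Category.assoc, ShortComplex.zero, Limits.comp_zero]⟩
  rw [hβf]
  cases t with
  | zero =>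
    rw [I.cocomplex.shape _ _ (by simp)]
    simp only [Limits.comp_zero]
    have : Subsingleton (I.torsionBoundaries 𝔞 0) := by
      rw [torsionBoundaries_zero]; infer_instance
    constructor
    · rintro ⟨-, h0⟩
      refine ⟨0, ?_⟩
      ext x
      exact congrArg (fun f : X ⟶ I.cocomplex.X 0 => f.hom x) h0
    · rintro ⟨b, hb⟩
      refine ⟨0, ?_⟩
      ext x
      have h1 : (b.hom x).1 = 0 := congrArg Subtype.val (Subsingleton.elim (b.hom x) 0)
      exact h1.symm.trans (congrArg (fun f : X ⟶ ModuleCat.of R (I.torsionCocycles 𝔞 0) =>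
        (f.hom x).1) hb)
  | succ n =>
    have := h n rfl
    rw [I.exists_comp_d_iff hX n f]
    constructor
    · rintro ⟨g, hg⟩
      exact ⟨_, hg⟩
    · rintro ⟨b, hb⟩
      obtain ⟨g, rfl⟩ := (I.shortExact_cocyclesSequence 𝔞 n).exists_lift_of_subsingleton_ext b
      exact ⟨g, hb⟩

variable [IsNoetherianRing R]

lemma nonempty_ext_linearEquiv_ext_one (hX : ∀ a ∈ 𝔞, ∀ x : X, a • x = 0) (n : ℕ)
    [Subsingleton (Ext X (ModuleCat.of R (I.TorsionCohomology 𝔞 (n + 1))) 0)] :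
    Nonempty (Ext X M (n + 1) ≃ₗ[R] Ext X (ModuleCat.of R (I.torsionCocycles 𝔞 n)) 1) := by
  have hS := I.shortExact_cohomologySequence 𝔞 (n + 1)
  have hS' := I.shortExact_cocyclesSequence 𝔞 n
  have := hS.mono_f
  let ι : (X ⟶ (I.cohomologySequence 𝔞 (n + 1)).X₁) →ₗ[R]
    (X ⟶ (I.cohomologySequence 𝔞 (n + 1)).X₂) := Linear.rightComp R X
      (I.cohomologySequence 𝔞 (n + 1)).f
  have hι : Function.Bijective ι := by
    refine ⟨fun f g h => (cancel_mono _).1 h, fun f => ?_⟩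
    have h0 : f ≫ (I.cohomologySequence 𝔞 (n + 1)).g = 0 :=
      (Ext.mk₀_bijective _ _).1 (Subsingleton.elim (α := Ext X
        (ModuleCat.of R (I.TorsionCohomology 𝔞 (n + 1))) 0) _ _)
    exact ⟨hS.exact.lift f h0, hS.exact.lift_f f h0⟩
  let e := LinearEquiv.ofBijective ι hι
  refine ⟨LinearMap.equivOfKerEq (I.cocycleToExt X (n + 1))
    (hS'.homToExtOne X ∘ₗ e.symm.toLinearMap ∘ₗ I.cocycleLift hX (n + 1))
    (I.cocycleToExt_surjective X (n + 1))
    ((hS'.homToExtOne_surjective X).comp (e.symm.surjective.comp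
      (I.cocycleLift_surjective hX (n + 1)))) ?_⟩
  ext f
  refine (I.cocycleToExt_eq_zero_iff X f).trans ((I.exists_comp_d_iff hX n f).trans ?_)
  refine Iff.trans ?_ (hS'.homToExtOne_eq_zero_iff _).symm
  refine exists_congr fun g => ?_
  exact (LinearEquiv.eq_symm_apply e).symm

/-- If the neighbours of `Ext X (H^t_𝔞(M)) s` in the spectral sequence
`Ext X (H^q_𝔞(M)) p ⟹ Ext X M (p + q)` vanish, then it is isomorphic to `Ext X M (s + t)`. -/
theorem nonempty_ext_linearEquiv_ext_torsionCohomology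
    (hX : ∀ a ∈ 𝔞, ∀ x : X, a • x = 0) (s t : ℕ)
    (h1 : ∀ i, i ≠ t → ∀ k, k + i = s + t →
      Subsingleton (Ext X (ModuleCat.of R (I.TorsionCohomology 𝔞 i)) k))
    (h2 : ∀ i, i < t → ∀ k, k + i = s + t + 1 →
      Subsingleton (Ext X (ModuleCat.of R (I.TorsionCohomology 𝔞 i)) k))
    (h3 : ∀ i, t < i → ∀ k, k + i + 1 = s + t →
      Subsingleton (Ext X (ModuleCat.of R (I.TorsionCohomology 𝔞 i)) k)) :
    Nonempty (Ext X M (s + t) ≃ₗ[R] Ext X (ModuleCat.of R (I.TorsionCohomology 𝔞 t)) s) := by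
  have hB := I.subsingleton_ext_torsionBoundaries t h2 le_rfl s (by lia)
  cases s with
  | zero =>
    rw [zero_add] at *
    refine I.nonempty_ext_linearEquiv_hom hX t fun n hn => ?_
    exact I.subsingleton_ext_torsionCocycles n (fun i hi => h1 i hi.ne) (by lia) 0 (by lia)
  | succ s =>
    have hB' := I.subsingleton_ext_torsionBoundaries t (fun i hi => h1 i hi.ne) le_rfl s (by lia)
    obtain ⟨e⟩ := (I.shortExact_cohomologySequence 𝔞 t).nonempty_ext_X₂_linearEquiv X (s + 1)
    obtain ⟨e'⟩ := I.nonempty_ext_torsionCocycles_linearEquiv t (m := s + t)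
      (fun i hi k hk => h1 i hi.ne' k (by lia)) (fun i hi k hk => h3 i hi k (by lia)) s le_rfl
      (by lia)
    have := h1 (s + t + 1) (by lia) 0 (by lia)
    obtain ⟨e''⟩ := I.nonempty_ext_linearEquiv_ext_one hX (s + t)
    rw [show s + 1 + t = s + t + 1 by lia]
    exact ⟨(e''.trans e'.symm).trans e⟩

end CategoryTheory.InjectiveResolution

namespace ModuleCat
open Abelian
variable {R : Type u} [CommRing R] (S : Submonoid R)

/-- The localization of a module, as an object of `ModuleCat (Localization S)`. -/
noncomputable abbrev loc (M : ModuleCat.{u} R) : ModuleCat.{u} (Localization S) :=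
  ModuleCat.of (Localization S) (LocalizedModule S M)

/-- The localization of a morphism. -/
noncomputable abbrev locMap {M N : ModuleCat.{u} R} (f : M ⟶ N) : loc S M ⟶ loc S N :=
  ModuleCat.ofHom (LocalizedModule.map S f.hom)

variable {S} in
/-- The localization of a linear equivalence. -/
noncomputable abbrev _root_.LinearEquiv.localizedModule {M N : Type*} [AddCommGroup M]
    [Module R M] [AddCommGroup N] [Module R N] (e : M ≃ₗ[R] N) :
    LocalizedModule S M ≃ₗ[Localization S] LocalizedModule S N :=
  IsLocalizedModule.mapEquiv S (LocalizedModule.mkLinearMap S M)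
    (LocalizedModule.mkLinearMap S N) (Localization S) e

lemma locMap_comp {X M N : ModuleCat.{u} R} (f : X ⟶ M) (g : M ⟶ N) :
    locMap S (f ≫ g) = locMap S f ≫ locMap S g := by
  ext x
  induction x using LocalizedModule.induction_on with
  | h m s => simp

/-- The localization of a short complex. -/
noncomputable abbrev locSequence (T : ShortComplex (ModuleCat.{u} R)) :
    ShortComplex (ModuleCat.{u} (Localization S)) where
  X₁ := loc S T.X₁
  X₂ := loc S T.X₂
  X₃ := loc S T.X₃
  f := locMap S T.f
  g := locMap S T.g
  zero := by
    ext x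
    induction x using LocalizedModule.induction_on with
    | h m s =>
      have h : T.g.hom (T.f.hom m) = 0 := congrArg (fun f : T.X₁ ⟶ T.X₃ => f.hom m) T.zero
      simp [h]

lemma shortExact_locSequence {T : ShortComplex (ModuleCat.{u} R)} (hT : T.ShortExact) :
    (locSequence S T).ShortExact := by
  have hi := (ModuleCat.mono_iff_injective T.f).1 hT.mono_f
  have hs := (ModuleCat.epi_iff_surjective T.g).1 hT.epi_g
  have he := (ShortComplex.ShortExact.moduleCat_exact_iff_function_exact T).1 hT.exact
  exact ModuleCat.shortComplex_shortExact _
    (LocalizedModule.map_exact S T.f.hom T.g.hom he)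
    (LocalizedModule.map_injective S T.f.hom hi) (LocalizedModule.map_surjective S T.g.hom hs)

lemma injective_loc [IsNoetherianRing R] (E : ModuleCat.{u} R) [Injective E] :
    Injective (loc S E) := by
  have : Injective (ModuleCat.of R E) := ‹Injective E›
  have : Module.Injective R E := Module.injective_module_of_injective_object R _
  have : Module.Injective (Localization S) (LocalizedModule S E) :=
    Module.injective_of_isLocalizedModule S (LocalizedModule.mkLinearMap S E)
  exact (Module.injective_iff_injective_object _ _).1 this

variable (X : ModuleCat.{u} R) [Module.FinitePresentation R X]

/-- Localization commutes with morphisms out of a finitely presented module. -/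
noncomputable def locHomEquiv (M : ModuleCat.{u} R) :
    LocalizedModule S (X ⟶ M) ≃ₗ[Localization S] (loc S X ⟶ loc S M) :=
  (ModuleCat.homLinearEquiv (S := R) (M := X) (N := M)).localizedModule ≪≫ₗ
    (IsLocalizedModule.linearEquiv S (LocalizedModule.mkLinearMap S (X →ₗ[R] M))
      (LocalizedModule.map S (M := X) (N := M))).extendScalarsOfIsLocalization S
        (Localization S) ≪≫ₗ
    (ModuleCat.homLinearEquiv (R := Localization S) (S := Localization S) (M := loc S X)
      (N := loc S M)).symm

lemma locHomEquiv_mk {M : ModuleCat.{u} R} (f : X ⟶ M) :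
    locHomEquiv S X M (LocalizedModule.mk f 1) = locMap S f := by
  have h : (ModuleCat.homLinearEquiv (S := R) (M := X) (N := M)).localizedModule
      (LocalizedModule.mk f (1 : S)) = LocalizedModule.mkLinearMap S (X →ₗ[R] M) f.hom :=
    LocalizedModule.map_mk S _ _ _
  refine congrArg (ModuleCat.homLinearEquiv (R := Localization S) (S := Localization S)
    (M := loc S X) (N := loc S M)).symm ((congrArg (IsLocalizedModule.linearEquiv S
      (LocalizedModule.mkLinearMap S (X →ₗ[R] M))
      (LocalizedModule.map S (M := X) (N := M))) h).trans ?_)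
  exact IsLocalizedModule.linearEquiv_apply S _ _ _

lemma locHomEquiv_comp {M N : ModuleCat.{u} R} (g : M ⟶ N) (x : LocalizedModule S (X ⟶ M)) :
    locHomEquiv S X N (LocalizedModule.map S (Linear.rightComp R X g) x) =
      locHomEquiv S X M x ≫ locMap S g := by
  induction x using LocalizedModule.induction_on with
  | h f s =>
    have key : ∀ {P : ModuleCat.{u} R} (f : X ⟶ P), LocalizedModule.mk f s =
        (Localization.mk 1 s : Localization S) • LocalizedModule.mk f (1 : S) := by
      intro P f
      rw [LocalizedModule.mk_smul_mk, one_smul, mul_one]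
    rw [LocalizedModule.map_mk, key, key f, map_smul, map_smul, Linear.smul_comp,
      locHomEquiv_mk, locHomEquiv_mk, ← locMap_comp]
    rfl

end ModuleCat

namespace CategoryTheory.ShortComplex.ShortExact
open Abelian ModuleCat
variable {R : Type u} [CommRing R] (S : Submonoid R)

lemma nonempty_ext_one_loc_linearEquiv [IsNoetherianRing R] (X : ModuleCat.{u} R)
    [Module.FinitePresentation R X] {T : ShortComplex (ModuleCat.{u} R)} (hT : T.ShortExact)
    [Injective T.X₂] : Nonempty (Ext (loc S X) (loc S T.X₁) 1 ≃ₗ[Localization S]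
      LocalizedModule S (Ext X T.X₁ 1)) := by
  have hT' := shortExact_locSequence S hT
  have : Injective (locSequence S T).X₂ := injective_loc S T.X₂
  have hα := hT'.homToExtOne_surjective (loc S X)
  have hm := LocalizedModule.map_surjective S _ (hT.homToExtOne_surjective X)
  have hβ := hm.comp (locHomEquiv S X T.X₃).symm.surjective
  have he : Function.Exact (Linear.rightComp R X T.g) (hT.homToExtOne X) := fun f =>
    hT.homToExtOne_eq_zero_iff f
  have he' : Function.Exact (LocalizedModule.map S (Linear.rightComp R X T.g))
      (LocalizedModule.map S (hT.homToExtOne X)) := LocalizedModule.map_exact S _ _ he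
  refine ⟨LinearMap.equivOfKerEq (hT'.homToExtOne (loc S X))
    (LocalizedModule.map S (hT.homToExtOne X) ∘ₗ (locHomEquiv S X T.X₃).symm.toLinearMap)
    hα hβ ?_⟩
  ext f
  refine (hT'.homToExtOne_eq_zero_iff f).trans
    (Iff.trans ?_ (he' ((locHomEquiv S X T.X₃).symm f)).symm)
  constructor
  · rintro ⟨g, rfl⟩
    refine ⟨(locHomEquiv S X T.X₂).symm g, (locHomEquiv S X T.X₃).injective ?_⟩
    refine (locHomEquiv_comp S X T.g _).trans ?_
    rw [LinearEquiv.apply_symm_apply, LinearEquiv.apply_symm_apply]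
  · rintro ⟨g, hg⟩
    refine ⟨locHomEquiv S X T.X₂ g, ?_⟩
    exact (locHomEquiv_comp S X T.g g).symm.trans ((LinearEquiv.eq_symm_apply _).1 hg)

end CategoryTheory.ShortComplex.ShortExact

namespace ModuleCat
open Abelian
variable {R : Type u} [CommRing R] [IsNoetherianRing R] (S : Submonoid R)

/-- Over a noetherian ring, `Ext` out of a finitely presented module commutes with
localization. -/
theorem nonempty_ext_loc_linearEquiv (X : ModuleCat.{u} R) [Module.FinitePresentation R X]
    (M : ModuleCat.{u} R) (n : ℕ) : Nonempty (Ext (loc S X) (loc S M) n ≃ₗ[Localization S]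
      LocalizedModule S (Ext X M n)) := by
  induction n generalizing M with
  | zero =>
    exact ⟨Ext.linearEquiv₀ ≪≫ₗ (locHomEquiv S X M).symm ≪≫ₗ
      (Ext.linearEquiv₀ (R := R) (X := X) (Y := M)).symm.localizedModule⟩
  | succ n ih =>
    let T : ShortComplex (ModuleCat.{u} R) := ShortComplex.mk (Injective.ι M)
      (Limits.cokernel.π (Injective.ι M)) (Limits.cokernel.condition _)
    have hT : T.ShortExact := { exact := ShortComplex.exact_cokernel _ }
    have : Injective T.X₂ := inferInstanceAs (Injective (Injective.under M))
    cases n with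
    | zero => exact hT.nonempty_ext_one_loc_linearEquiv S X
    | succ n =>
      have : Injective (locSequence S T).X₂ := injective_loc S T.X₂
      obtain ⟨e₁⟩ := (shortExact_locSequence S hT).nonempty_ext_X₃_linearEquiv (loc S X) n
      obtain ⟨e₂⟩ := hT.nonempty_ext_X₃_linearEquiv X n
      obtain ⟨e⟩ := ih T.X₃
      exact ⟨e₁.symm ≪≫ₗ e ≪≫ₗ e₂.localizedModule⟩

end ModuleCat

section
variable {R : Type u} [CommRing R]

lemma nonempty_extObj_linearEquiv {X Y M N : ModuleCat.{u} R} (e : X ≃ₗ[R] Y) (e' : M ≃ₗ[R] N)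
    (n : ℕ) : Nonempty (extObj X M n ≃ₗ[R] extObj Y N n) :=
  ⟨((((Ext R (ModuleCat.{u} R) n).mapIso e.toModuleIso.symm.op).app M) ≪≫
    ((Ext R (ModuleCat.{u} R) n).obj (Opposite.op Y)).mapIso e'.toModuleIso).toLinearEquiv⟩

/-- The localization of `R ⧸ 𝔭` at `𝔭` is the residue field of `R_𝔭`. -/
noncomputable def localizedQuotientEquivResidueField (𝔭 : Ideal R) [𝔭.IsPrime] :
    LocalizedModule 𝔭.primeCompl (R ⧸ 𝔭) ≃ₗ[Localization.AtPrime 𝔭]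
      IsLocalRing.ResidueField (Localization.AtPrime 𝔭) :=
  (IsLocalizedModule.linearEquiv 𝔭.primeCompl (LocalizedModule.mkLinearMap 𝔭.primeCompl (R ⧸ 𝔭))
      (Submodule.toLocalizedQuotient' (Localization.AtPrime 𝔭) 𝔭.primeCompl
        (Algebra.linearMap R (Localization.AtPrime 𝔭)) 𝔭)).extendScalarsOfIsLocalization
        𝔭.primeCompl (Localization.AtPrime 𝔭) ≪≫ₗ
    Submodule.quotEquivOfEq _ (IsLocalRing.maximalIdeal (Localization.AtPrime 𝔭))
      ((Ideal.localized'_eq_map _ _ _).trans (Localization.AtPrime.map_eq_maximalIdeal))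

lemma nonempty_extObj_localCohomology_linearEquiv (𝔞 : Ideal R) {M : ModuleCat.{u} R}
    (I : InjectiveResolution M) (X : ModuleCat.{u} R) (i k : ℕ) :
    Nonempty (extObj X ((localCohomology 𝔞 i).obj M) k ≃ₗ[R]
      Abelian.Ext X (ModuleCat.of R (I.TorsionCohomology 𝔞 i)) k) := by
  obtain ⟨e⟩ := I.nonempty_localCohomology_linearEquiv 𝔞 i
  obtain ⟨e'⟩ := nonempty_extObj_linearEquiv (LinearEquiv.refl R X)
    (N := ModuleCat.of R (I.TorsionCohomology 𝔞 i)) e k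
  exact ⟨e' ≪≫ₗ ProjectiveResolution.extLinearEquiv _ _ k⟩

variable [IsNoetherianRing R]

lemma bassNumber_eq_krullDim_submodule (𝔭 : Ideal R) [𝔭.IsPrime] (n : ℕ) (M : ModuleCat.{u} R) :
    bassNumber 𝔭 n M = Order.krullDim (Submodule (Localization.AtPrime 𝔭)
      (LocalizedModule 𝔭.primeCompl (Abelian.Ext (ModuleCat.of R (R ⧸ 𝔭)) M n))) := by
  let X := ModuleCat.of R (R ⧸ 𝔭)
  have : Module.FinitePresentation R X := Module.finitePresentation_of_finite R _
  obtain ⟨e₁⟩ := nonempty_extObj_linearEquiv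
    (M := ModuleCat.loc 𝔭.primeCompl M) (N := ModuleCat.loc 𝔭.primeCompl M)
    (X := ModuleCat.loc 𝔭.primeCompl X)
    (Y := ModuleCat.of (Localization.AtPrime 𝔭)
      (IsLocalRing.ResidueField (Localization.AtPrime 𝔭)))
    (localizedQuotientEquivResidueField 𝔭) (LinearEquiv.refl _ _) n
  obtain ⟨e₂⟩ := ModuleCat.nonempty_ext_loc_linearEquiv 𝔭.primeCompl X M n
  exact Order.krullDim_eq_of_orderIso (Submodule.orderIsoMapComap
    (e₁.symm ≪≫ₗ ProjectiveResolution.extLinearEquiv _ _ n ≪≫ₗ e₂))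

end

/-- Yang–Shen, Corollary 4.5 (module case): let `𝔭 ⊇ 𝔞` be a prime ideal of a noetherian ring
`R`, `M` an `R`-module and `s, t ≥ 0` integers such that
(1) `Ext^{s+t-i}_R(R/𝔭, H^i_𝔞(M)) = 0` for `0 ≤ i < t` and for `t+1 ≤ i ≤ s+t`;
(2) `Ext^{s+1+i}_R(R/𝔭, H^{t-i}_𝔞(M)) = 0` for `0 ≤ i ≤ t`;
(3) `Ext^{s-1-i}_R(R/𝔭, H^{t+i}_𝔞(M)) = 0` for `0 ≤ i ≤ s-1`.
Then `μ^{s+t}(𝔭, M) = μ^s(𝔭, H^t_𝔞(M))`. -/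
theorem bassNumber_eq_bassNumber_localCohomology
    {R : Type u} [CommRing R] [IsNoetherianRing R] (𝔞 𝔭 : Ideal R) [𝔭.IsPrime] (h𝔞𝔭 : 𝔞 ≤ 𝔭)
    (M : ModuleCat.{u} R) (s t : ℕ)
    (h1 : ∀ i : ℕ, (i < t ∨ (t + 1 ≤ i ∧ i ≤ s + t)) →
      Subsingleton (extIdeal 𝔭 (s + t - i) ((localCohomology 𝔞 i).obj M)))
    (h2 : ∀ i : ℕ, i ≤ t →
      Subsingleton (extIdeal 𝔭 (s + 1 + i) ((localCohomology 𝔞 (t - i)).obj M)))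
    (h3 : ∀ i : ℕ, i < s →
      Subsingleton (extIdeal 𝔭 (s - 1 - i) ((localCohomology 𝔞 (t + i)).obj M))) :
    bassNumber 𝔭 (s + t) M = bassNumber 𝔭 s ((localCohomology 𝔞 t).obj M) := by
  let I := injectiveResolution M
  let X := ModuleCat.of R (R ⧸ 𝔭)
  have hX : ∀ a ∈ 𝔞, ∀ x : X, a • x = 0 := by
    rintro a ha ⟨x⟩
    exact Ideal.Quotient.eq_zero_iff_mem.2 (Ideal.mul_mem_right _ _ (h𝔞𝔭 ha))
  have key (i k : ℕ) (h : Subsingleton (extIdeal 𝔭 k ((localCohomology 𝔞 i).obj M))) :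
      Subsingleton (Abelian.Ext X (ModuleCat.of R (I.TorsionCohomology 𝔞 i)) k) :=
    have ⟨e⟩ := nonempty_extObj_localCohomology_linearEquiv 𝔞 I X i k
    e.toEquiv.subsingleton_congr.1 h
  obtain ⟨e⟩ := I.nonempty_ext_linearEquiv_ext_torsionCohomology (𝔞 := 𝔞) hX s t
    (fun i hi k hk => key i k (by
      obtain rfl : k = s + t - i := by lia
      exact h1 i (by lia)))
    (fun i hi k hk => key i k (by
      obtain ⟨j, rfl, hj⟩ : ∃ j, i = t - j ∧ j ≤ t := ⟨t - i, by lia, by lia⟩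
      obtain rfl : k = s + 1 + j := by lia
      exact h2 j hj))
    (fun i hi k hk => key i k (by
      obtain ⟨j, rfl⟩ := Nat.exists_eq_add_of_lt hi
      obtain rfl : k = s - 1 - (j + 1) := by lia
      exact h3 (j + 1) (by lia)))
  obtain ⟨e'⟩ := nonempty_extObj_localCohomology_linearEquiv 𝔞 I X t s
  let e'' : Abelian.Ext X M (s + t) ≃ₗ[R] Abelian.Ext X ((localCohomology 𝔞 t).obj M) s :=
    e ≪≫ₗ e'.symm ≪≫ₗ ProjectiveResolution.extLinearEquiv X _ s
  rw [bassNumber_eq_krullDim_submodule, bassNumber_eq_krullDim_submodule]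
  exact Order.krullDim_eq_of_orderIso (Submodule.orderIsoMapComap
    (e''.localizedModule (S := 𝔭.primeCompl)))
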